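/- non(M) equals the smallest cardinality of a family Φ of real sequences converging to ∞ which satisfies condition (C_1) and does not satisfy condition (C_2). That is, the infimum of the cardinals card Φ over all families Φ of sequences tending to ∞ satisfying (C_1) but not (C_2) equals non(M). -/

import Mathlib

/-!
The theorem is a variant of Bartoszyński's description of `non(M)` by infinitely often equal
functions.

*Upper bound.* Let `wave t n = n + |sin (n t)|`. At most one term of `wave t` lies in
`(k, k + 1/2)`, so no family of such sequences satisfies (C_2). For fixed intervals `(x k, y k)` it
is a dense open condition on `t` that `wave t` meets one of them beyond a given `K`. Hence
the `t` for which `wave t` meets infinitely many of them form a comeagre set, and `wave '' X`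
satisfies (C_1) for every non-meagre `X`.

*Lower bound.* Let `Φ` satisfy (C_1) but not (C_2), the latter witnessed by `(x k, y k)`. Choose
countably many disjoint pieces in each `(x k, y k)` and let `F a k` be the number of the piece
containing the term of `a` in `(x k, y k)`, which is unique for large `k`. Applying (C_1) to pieces
of a subsequence of the intervals shows that for each `g` and each infinite `A ⊆ ℕ` some `F a`
agrees with `g` infinitely often on `A`.

Such a family, indexed by `ι`, yields a non-meagre set of reals indexed by `ι × ι`. Number the
members of a countable π-base of compact sets by `ℕ`. A pair `(α, β)` determines a decreasing
sequence of members: `F β n` codes a finite table telling where to pass at step `n`, and a fast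
growing function obtained from `F α` bounds the numbers that may be used; let `Y (α, β)` be a point
of the intersection. Given a comeagre set, there is a strategy `σ` such that following `σ`
infinitely often leads into the set. A suitable `α` permits the moves of `σ` at infinitely many
steps, and then a suitable `β` follows `σ` at infinitely many of those. So the points `Y (α, β)` are
not all outside the given set. As countable sets are meagre, `ι` is infinite, and
`non(M) ≤ (card ι)² = card ι`.
-/

open Filter Set

/-- The sequence `a` tends to `∞`. -/
def TendsToInfty (a : ℕ → ℝ) : Prop := Filter.Tendsto a Filter.atTop Filter.atTop

/-- Condition (C): for every open set `U ⊆ ℝ` unbounded above, some sequence of `Φ`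
has infinitely many terms in `U`. -/
def CondC (Φ : Set (ℕ → ℝ)) : Prop :=
  ∀ U : Set ℝ, IsOpen U → ¬ BddAbove U → ∃ a ∈ Φ, {n : ℕ | a n ∈ U}.Infinite

/-- Condition (1): the family `{f_a : a ∈ Φ}` is bounded with respect to eventual
domination, stated without defining `f_a`. -/
def Cond1 (Φ : Set (ℕ → ℝ)) : Prop :=
  ∃ g : ℕ → ℕ, ∀ a ∈ Φ, ∀ᶠ i : ℕ in Filter.atTop, ∀ j : ℕ, 1 ≤ j →
    Set.Ioi (i : ℝ) ⊆ ⋃ n : ℕ, Set.Ioo (a n - 1 / j) (a n + 1 / j) → j ≤ g i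

/-- Condition (2): `0 < a (n+1) - a n ≤ a n - a (n-1)` for all `n ≥ 1`. -/
def Cond2 (a : ℕ → ℝ) : Prop :=
  ∀ n : ℕ, 0 < a (n + 2) - a (n + 1) ∧ a (n + 2) - a (n + 1) ≤ a (n + 1) - a n

/-- Condition (3): the gaps of `a` are bounded below by a positive constant. -/
def Cond3 (a : ℕ → ℝ) : Prop :=
  ∃ r : ℝ, 0 < r ∧ ∀ n : ℕ, r < a (n + 1) - a n

/-- Condition (C_m): for every interlaced pair of sequences `x, y` tending to `∞`,
some `a ∈ Φ` has, for infinitely many `k`, at least `m` terms in `(x k, y k)`. -/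
def CondCm (m : ℕ) (Φ : Set (ℕ → ℝ)) : Prop :=
  ∀ x y : ℕ → ℝ, (∀ k, x k < y k) → (∀ k, y k < x (k + 1)) →
    Filter.Tendsto x Filter.atTop Filter.atTop →
    ∃ a ∈ Φ, {k : ℕ | ∃ s : Finset ℕ, m ≤ s.card ∧
      ∀ n ∈ s, a n ∈ Set.Ioo (x k) (y k)}.Infinite

/-- `non(M)`: the least cardinality of a non-meagre subset of `ℝ`. -/
noncomputable def nonMeagreCard : Cardinal :=
  sInf {c : Cardinal | ∃ X : Set ℝ, ¬ IsMeagre X ∧ c = Cardinal.mk X}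

/-- The bounding number `b`. -/
noncomputable def boundingNumber : Cardinal :=
  sInf {c : Cardinal | ∃ F : Set (ℕ → ℕ),
    (¬ ∃ g : ℕ → ℕ, ∀ f ∈ F, {i : ℕ | g i < f i}.Finite) ∧ c = Cardinal.mk F}

/-! ### Families with (C_1) from non-meagre sets -/

theorem exists_finset_le_card_iff_le_encard {α : Type*} {A : Set α} {m : ℕ} :
    (∃ s : Finset α, m ≤ s.card ∧ ∀ a ∈ s, a ∈ A) ↔ (m : ℕ∞) ≤ A.encard := by
  constructor
  · rintro ⟨s, hms, hsA⟩
    calc (m : ℕ∞) ≤ s.card := Nat.cast_le.2 hms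
      _ = (s : Set α).encard := (encard_coe_eq_coe_finsetCard s).symm
      _ ≤ A.encard := encard_le_encard hsA
  · intro h
    obtain ⟨t, htA, htm⟩ := exists_subset_encard_eq h
    lift t to Finset α using finite_of_encard_eq_coe htm
    rw [encard_coe_eq_coe_finsetCard] at htm
    exact ⟨t, (Nat.cast_inj.1 htm).ge, htA⟩

theorem condCm_iff_frequently_le_encard {m : ℕ} {Φ : Set (ℕ → ℝ)} :
    CondCm m Φ ↔ ∀ x y : ℕ → ℝ, (∀ k, x k < y k) → (∀ k, y k < x (k + 1)) →
      Tendsto x atTop atTop →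
        ∃ a ∈ Φ, ∃ᶠ k in atTop, (m : ℕ∞) ≤ (a ⁻¹' Ioo (x k) (y k)).encard := by
  simp only [CondCm, Nat.frequently_atTop_iff_infinite, ← exists_finset_le_card_iff_le_encard,
    mem_preimage]

theorem tendsToInfty_of_natCast_le {a : ℕ → ℝ} (ha : ∀ n : ℕ, (n : ℝ) ≤ a n) : TendsToInfty a :=
  tendsto_atTop_mono ha tendsto_natCast_atTop_atTop

theorem not_condCm_two_of_mem_Icc {Φ : Set (ℕ → ℝ)}
    (hΦ : ∀ a ∈ Φ, ∀ n : ℕ, a n ∈ Icc (n : ℝ) (n + 1)) : ¬ CondCm 2 Φ := by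
  rw [condCm_iff_frequently_le_encard]
  intro h
  obtain ⟨a, haΦ, ha⟩ := h (fun k => k) (fun k => k + 1 / 2) (fun k => by norm_num)
    (fun k => by push_cast; linarith) tendsto_natCast_atTop_atTop
  obtain ⟨k, hk⟩ := ha.exists
  have eq_k {n : ℕ} (hn : a n ∈ Ioo (k : ℝ) (k + 1 / 2)) : n = k := by
    have hnk : (n : ℝ) < k + 1 := by linarith [(hΦ a haΦ n).1, hn.2]
    have hkn : (k : ℝ) < n + 1 := by linarith [(hΦ a haΦ n).2, hn.1]
    norm_cast at hnk hkn
    lia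
  refine hk.not_gt ((encard_le_one_iff_subsingleton.2 fun n hn m hm => ?_).trans_lt (by norm_num))
  exact (eq_k hn).trans (eq_k hm).symm

theorem eventually_residual_frequently_mem {X : Type*} [TopologicalSpace X] {U : ℕ → Set X}
    (hopen : ∀ k, IsOpen (U k)) (hdense : ∀ K, Dense (⋃ k ≥ K, U k)) :
    ∀ᶠ t in residual X, ∃ᶠ k in atTop, t ∈ U k := by
  have hres : ∀ᶠ t in residual X, ∀ K, t ∈ ⋃ k ≥ K, U k :=
    eventually_countable_forall.2 fun K =>
      residual_of_dense_open (isOpen_biUnion fun k _ => hopen k) (hdense K)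
  filter_upwards [hres] with t ht
  simpa only [frequently_atTop, mem_iUnion₂, exists_prop] using ht

/-- The sequence `n + |sin (n t)|`, whose `n`-th term lies in `[n, n + 1]`. As `t` runs through a
short interval, its `n`-th term takes every value in `[n, n + 1]` once `n` is large. -/
noncomputable def wave (t : ℝ) (n : ℕ) : ℝ := n + |Real.sin (n * t)|

theorem wave_mem_Icc (t : ℝ) (n : ℕ) : wave t n ∈ Icc (n : ℝ) (n + 1) :=
  ⟨le_add_of_nonneg_right (abs_nonneg _), add_le_add_right (Real.abs_sin_le_one _) _⟩

theorem exists_mem_Ioc_wave_eq {n : ℕ} (hn : n ≠ 0) {p : ℝ} (hp : p ∈ Icc (n : ℝ) (n + 1))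
    (a : ℝ) : ∃ t ∈ Ioc a (a + (n : ℝ)⁻¹ * (2 * Real.pi)), wave t n = p := by
  have hn' : (n : ℝ) ≠ 0 := Nat.cast_ne_zero.2 hn
  obtain ⟨t, ht, hsin⟩ := (Real.sin_periodic.const_mul (n : ℝ)).exists_mem_Ioc (by positivity)
    ((n : ℝ)⁻¹ * Real.arcsin (p - n)) a
  refine ⟨t, ht, ?_⟩
  rw [mul_inv_cancel_left₀ hn', Real.sin_arcsin (by linarith [hp.1]) (by linarith [hp.2])] at hsin
  rw [wave, ← hsin, abs_of_nonneg (sub_nonneg.2 hp.1), add_sub_cancel]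

theorem dense_biUnion_setOf_wave_mem {x y : ℕ → ℝ} (hxy : ∀ k, x k < y k)
    (hx : Tendsto x atTop atTop) (K : ℕ) :
    Dense (⋃ k ≥ K, {t | ∃ n, wave t n ∈ Ioo (x k) (y k)}) := by
  refine dense_of_exists_between fun a b hab => ?_
  have hperiod : Tendsto (fun n : ℕ => (n : ℝ)⁻¹ * (2 * Real.pi)) atTop (nhds 0) := by
    simpa using tendsto_inv_atTop_nhds_zero_nat.mul_const (2 * Real.pi)
  obtain ⟨N, hN⟩ := eventually_atTop.1 (hperiod.eventually_lt_const (sub_pos.2 hab))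
  obtain ⟨k, hkK, hk⟩ := ((eventually_ge_atTop K).and
    (hx.eventually_ge_atTop ((N + 1 : ℕ) : ℝ))).exists
  obtain ⟨p, hp⟩ := exists_between (hxy k)
  have hn : N + 1 ≤ ⌊p⌋₊ := Nat.le_floor (hk.trans hp.1.le)
  have hp0 : 0 ≤ p := (Nat.cast_nonneg _).trans (hk.trans hp.1.le)
  obtain ⟨t, ht, htp⟩ := exists_mem_Ioc_wave_eq (by lia)
    ⟨Nat.floor_le hp0, (Nat.lt_floor_add_one p).le⟩ a
  refine ⟨t, mem_iUnion₂.2 ⟨k, hkK, ⌊p⌋₊, by rwa [htp]⟩, ht.1, ht.2.trans_lt ?_⟩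
  linarith [hN ⌊p⌋₊ (by lia)]

theorem condCm_one_image_wave {X : Set ℝ} (hX : ¬ IsMeagre X) : CondCm 1 (wave '' X) := by
  rw [condCm_iff_frequently_le_encard]
  intro x y hxy _ hx
  simp only [Nat.cast_one, one_le_encard_iff_nonempty, exists_mem_image]
  have hopen (k : ℕ) : IsOpen {t | ∃ n, wave t n ∈ Ioo (x k) (y k)} := by
    simp only [ofPred_exists]
    exact isOpen_iUnion fun n => isOpen_Ioo.preimage (by unfold wave; fun_prop)
  by_contra! hfew
  refine hX (mem_of_superset (eventually_residual_frequently_mem hopen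
    (dense_biUnion_setOf_wave_mem hxy hx)) fun t ht htX => ht ?_)
  filter_upwards [hfew t htX] with k hk ⟨n, hn⟩
  exact (hk ▸ hn : n ∈ (∅ : Set ℕ))

/-! ### Infinitely often equal families -/

/-- The functions `F i` agree infinitely often with every `g`, even along any prescribed infinite
set. Infinity of a set of natural numbers is expressed by `∃ᶠ k in atTop`. -/
def InfinitelyOftenEqual {ι κ : Type*} (F : ι → ℕ → κ) : Prop :=
  ∀ A : Set ℕ, (∃ᶠ k in atTop, k ∈ A) → ∀ g : ℕ → κ, ∃ i, ∃ᶠ k in atTop, k ∈ A ∧ F i k = g k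

theorem InfinitelyOftenEqual.comp_surjective {ι κ κ' : Type*} {F : ι → ℕ → κ}
    (hF : InfinitelyOftenEqual F) {f : κ → κ'} (hf : f.Surjective) :
    InfinitelyOftenEqual fun i k => f (F i k) := by
  intro A hA g
  obtain ⟨i, hi⟩ := hF A hA fun k => Function.surjInv hf (g k)
  refine ⟨i, hi.mono fun k ⟨hkA, hk⟩ => ⟨hkA, ?_⟩⟩
  exact (congrArg f hk).trans (Function.surjInv_eq hf (g k))

theorem exists_interlaced_eventually_subsingleton {Φ : Set (ℕ → ℝ)} (hΦ : ¬ CondCm 2 Φ) :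
    ∃ x y : ℕ → ℝ, (∀ k, x k < y k) ∧ (∀ k, y k < x (k + 1)) ∧ Tendsto x atTop atTop ∧
      ∀ a ∈ Φ, ∀ᶠ k in atTop, (a ⁻¹' Ioo (x k) (y k)).Subsingleton := by
  rw [condCm_iff_frequently_le_encard] at hΦ
  push Not at hΦ
  obtain ⟨x, y, hxy, hyx, hx, hfew⟩ := hΦ
  refine ⟨x, y, hxy, hyx, hx, fun a ha => (hfew a ha).mono fun k hk => ?_⟩
  exact encard_le_one_iff_subsingleton.1 (Order.le_of_lt_add_one (by rwa [one_add_one_eq_two]))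

/-- The number of the interval `(u i, u (i + 1))` visited by the sequence `a`. It is only meaningful
when exactly one of these intervals is visited. -/
noncomputable def visitedPiece (u : ℕ → ℝ) (a : ℕ → ℝ) : ℕ :=
  sInf {i | ∃ n, a n ∈ Ioo (u i) (u (i + 1))}

theorem visitedPiece_eq {u : ℕ → ℝ} (hu : StrictMono u) {x y : ℝ} (hmem : ∀ i, u i ∈ Ioo x y)
    {a : ℕ → ℝ} (ha : (a ⁻¹' Ioo x y).Subsingleton) {n i : ℕ} (hn : a n ∈ Ioo (u i) (u (i + 1))) :
    visitedPiece u a = i := by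
  have piece_subset (j : ℕ) : Ioo (u j) (u (j + 1)) ⊆ Ioo x y :=
    Ioo_subset_Ioo (hmem j).1.le (hmem (j + 1)).2.le
  suffices {j | ∃ n, a n ∈ Ioo (u j) (u (j + 1))} = {i} by rw [visitedPiece, this, csInf_singleton]
  refine eq_singleton_iff_unique_mem.2 ⟨⟨n, hn⟩, fun j ⟨m, hm⟩ => ?_⟩
  obtain rfl : m = n := ha (piece_subset j hm) (piece_subset i hn)
  by_contra hji
  exact (hu.monotone.pairwise_disjoint_on_Ioo_succ hji).notMem_of_mem_left hm hn

theorem exists_infinitelyOftenEqual {Φ : Set (ℕ → ℝ)} (h₁ : CondCm 1 Φ) (h₂ : ¬ CondCm 2 Φ) :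
    ∃ F : Φ → ℕ → ℕ, InfinitelyOftenEqual F := by
  obtain ⟨x, y, hxy, hyx, hx, hsub⟩ := exists_interlaced_eventually_subsingleton h₂
  have hmono : StrictMono x := strictMono_nat_of_lt_succ fun k => (hxy k).trans (hyx k)
  choose u hu hmem _ using fun k => exists_seq_strictMono_tendsto' (hxy k)
  refine ⟨fun a k => visitedPiece (u k) a, fun A hA g => ?_⟩
  obtain ⟨φ, hφ, hφA⟩ := extraction_of_frequently_atTop hA
  have hnext (j : ℕ) : u (φ j) (g (φ j) + 1) < u (φ (j + 1)) (g (φ (j + 1))) :=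
    calc u (φ j) (g (φ j) + 1) < y (φ j) := (hmem _ _).2
      _ < x (φ j + 1) := hyx _
      _ ≤ x (φ (j + 1)) := hmono.monotone (hφ j.lt_succ_self)
      _ < u (φ (j + 1)) (g (φ (j + 1))) := (hmem _ _).1
  obtain ⟨a, haΦ, ha⟩ := condCm_iff_frequently_le_encard.1 h₁
    (fun j => u (φ j) (g (φ j))) (fun j => u (φ j) (g (φ j) + 1))
    (fun j => hu _ (Nat.lt_succ_self _)) hnext
    (tendsto_atTop_mono (fun j => (hmem _ _).1.le) (hx.comp hφ.tendsto_atTop))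
  simp only [Nat.cast_one, one_le_encard_iff_nonempty] at ha
  refine ⟨⟨a, haΦ⟩, hφ.tendsto_atTop.frequently ?_⟩
  refine (ha.and_eventually (hφ.tendsto_atTop.eventually (hsub a haΦ))).mono ?_
  rintro j ⟨⟨n, hn⟩, hj⟩
  exact ⟨hφA j, visitedPiece_eq (hu _) (hmem _) hj hn⟩

/-! ### Fast growing bounds -/

theorem exists_monotone_forall_le (σ : ℕ → ℕ → ℕ) :
    ∃ S : ℕ → ℕ, Monotone S ∧ id ≤ S ∧ ∀ m, ∀ n ≤ m, ∀ i ≤ m, σ n i ≤ S m := by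
  refine ⟨fun m => m ⊔ (Finset.Iic (m, m)).sup (Function.uncurry σ), fun m m' h => ?_,
    fun m => le_sup_left, fun m n hn i hi => ?_⟩
  · exact sup_le_sup h (Finset.sup_mono (Finset.Iic_subset_Iic.2 ⟨h, h⟩))
  · exact le_sup_of_le_right
      (Finset.le_sup (f := Function.uncurry σ) (Finset.mem_Iic.2 (Prod.mk_le_mk.2 ⟨hn, hi⟩)))

theorem frequently_le_succ_of_frequently_iterate_lt {S u : ℕ → ℕ} (hS : Monotone S) (hid : id ≤ S)
    (hu : ∃ᶠ n in atTop, S^[n] n < u n) : ∃ᶠ n in atTop, S (u n) ≤ u (n + 1) := by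
  intro hslow
  obtain ⟨N, hN⟩ := eventually_atTop.1 hslow
  obtain ⟨n, hn, hNn⟩ := (hu.and_eventually (eventually_ge_atTop (N + u N))).exists
  obtain ⟨k, rfl⟩ := Nat.exists_eq_add_of_le ((Nat.le_add_right N (u N)).trans hNn)
  refine hn.not_ge ?_
  calc u (N + k) ≤ S^[k] (u N) :=
        hS.seq_le_seq (x := fun k => u (N + k)) (y := fun k => S^[k] (u N)) k le_rfl
          (fun i _ => (not_le.1 (hN (N + i) (Nat.le_add_right N i))).le)
          (fun i _ => (Function.iterate_succ_apply' S i (u N)).ge)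
    _ ≤ S^[k] (N + k) := hS.iterate k (by lia)
    _ ≤ S^[N + k] (N + k) := Function.monotone_iterate_of_id_le hid (Nat.le_add_left k N) _

/-- A monotone function dominating both `f` and the identity. -/
def envelope (f : ℕ → ℕ) : ℕ →o ℕ := partialSups fun n => max n (f n)

theorem le_envelope (f : ℕ → ℕ) (n : ℕ) : f n ≤ envelope f n :=
  (le_max_right _ _).trans (le_partialSups (fun n => max n (f n)) n)

theorem self_le_envelope (f : ℕ → ℕ) (n : ℕ) : n ≤ envelope f n :=
  (le_max_left _ _).trans (le_partialSups (fun n => max n (f n)) n)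

theorem InfinitelyOftenEqual.exists_frequently_forall_le_envelope {ι : Type*} {F : ι → ℕ → ℕ}
    (hF : InfinitelyOftenEqual F) (σ : ℕ → ℕ → ℕ) :
    ∃ i, ∃ᶠ n in atTop, ∀ j ≤ envelope (F i) n, σ n j ≤ envelope (F i) (n + 1) := by
  obtain ⟨S, hS, hid, hσS⟩ := exists_monotone_forall_le σ
  obtain ⟨i, hi⟩ := hF univ (Eventually.of_forall mem_univ).frequently fun n => S^[n] n + 1
  have hfast : ∃ᶠ n in atTop, S^[n] n < envelope (F i) n :=
    hi.mono fun n ⟨_, hn⟩ => Nat.lt_of_succ_le (hn.symm.trans_le (le_envelope (F i) n))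
  refine ⟨i, (frequently_le_succ_of_frequently_iterate_lt hS hid hfast).mono fun n hn j hj => ?_⟩
  exact (hσS _ n (self_le_envelope _ n) j hj).trans hn

/-! ### Non-meagre sets from infinitely often equal families -/

open TopologicalSpace (PositiveCompacts countableBasis)

theorem isMeagre_of_countable {X : Type*} [TopologicalSpace X] [T1Space X] [PerfectSpace X]
    {s : Set X} (hs : s.Countable) : IsMeagre s := by
  rw [← biUnion_of_singleton s]
  refine isMeagre_biUnion hs fun x _ => ?_
  exact residual_of_dense_open isOpen_compl_singleton (dense_compl_singleton x)

section Descent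

variable {X : Type*} [TopologicalSpace X]

/-- A sequence of compact sets with nonempty interior such that every nonempty open set contains
one of them. Its indices are the positions of the descents considered below. -/
def IsCompactPiBase (I : ℕ → PositiveCompacts X) : Prop :=
  ∀ U : Set X, IsOpen U → U.Nonempty → ∃ i, (I i : Set X) ⊆ U

theorem exists_isCompactPiBase (X : Type*) [TopologicalSpace X] [LocallyCompactSpace X]
    [SecondCountableTopology X] [Nonempty X] :
    ∃ I : ℕ → PositiveCompacts X, IsCompactPiBase I := by
  have hbasis := TopologicalSpace.isBasis_countableBasis X
  obtain ⟨V, hV, -, -⟩ := hbasis.exists_subset_of_mem_open (mem_univ (Classical.arbitrary X))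
    isOpen_univ
  obtain ⟨B, hB⟩ := (TopologicalSpace.countable_countableBasis X).exists_eq_range ⟨V, hV⟩
  have hBmem (i : ℕ) : B i ∈ countableBasis X := hB ▸ mem_range_self i
  choose I hI using fun i => exists_positiveCompacts_subset (hbasis.isOpen (hBmem i))
    (TopologicalSpace.nonempty_of_mem_countableBasis (hBmem i))
  refine ⟨I, fun U hU ⟨x, hx⟩ => ?_⟩
  obtain ⟨W, hW, -, hWU⟩ := hbasis.exists_subset_of_mem_open hx hU
  obtain ⟨i, rfl⟩ : W ∈ range B := hB ▸ hW
  exact ⟨i, (hI i).trans hWU⟩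

theorem IsCompactPiBase.exists_strategy [BaireSpace X] {I : ℕ → PositiveCompacts X}
    (hI : IsCompactPiBase I) {W : Set X} (hW : W ∈ residual X) :
    ∃ σ : ℕ → ℕ → ℕ, (∀ n i, (I (σ n i) : Set X) ⊆ I i) ∧
      ∀ z, (∃ᶠ n in atTop, ∃ i, z ∈ I (σ n i)) → z ∈ W := by
  obtain ⟨G, hGW, hG, hGdense⟩ := mem_residual.1 hW
  obtain ⟨D, hD, rfl⟩ := isGδ_iff_eq_iInter_nat.1 hG
  -- Step `n` enters all of `D 0, …, D n`, so infinitely many steps suffice to enter every `D k`.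
  have hEopen (n : ℕ) : IsOpen (⋂ k ≤ n, D k) := (finite_Iic n).isOpen_biInter fun k _ => hD k
  have hEdense (n : ℕ) : Dense (⋂ k ≤ n, D k) :=
    hGdense.mono (subset_iInter₂ fun k _ => iInter_subset D k)
  have hstep (n i : ℕ) : ∃ j, (I j : Set X) ⊆ interior (I i) ∩ ⋂ k ≤ n, D k :=
    hI _ (isOpen_interior.inter (hEopen n))
      ((hEdense n).inter_open_nonempty _ isOpen_interior (I i).interior_nonempty)
  choose σ hσ using hstep
  refine ⟨σ, fun n i => (hσ n i).trans (inter_subset_left.trans interior_subset), fun z hz => ?_⟩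
  refine hGW (mem_iInter.2 fun k => ?_)
  obtain ⟨n, ⟨i, hi⟩, hkn⟩ := (hz.and_eventually (eventually_ge_atTop k)).exists
  exact mem_iInter₂.1 (hσ n i hi).2 k hkn

open Classical in
/-- The positions reached from `0` when, at step `n`, the move from `i` to `T n i` is carried out if
it leads to a subset and to an index at most `u (n + 1)`, and is skipped otherwise. -/
noncomputable def descend (I : ℕ → PositiveCompacts X) (u : ℕ → ℕ) (T : ℕ → ℕ → ℕ) : ℕ → ℕ
  | 0 => 0
  | n + 1 =>
    let i := descend I u T n
    if (I (T n i) : Set X) ⊆ I i ∧ T n i ≤ u (n + 1) then T n i else i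

variable (I : ℕ → PositiveCompacts X) {u : ℕ → ℕ} (T : ℕ → ℕ → ℕ)

theorem descend_succ_subset (u : ℕ → ℕ) (n : ℕ) :
    (I (descend I u T (n + 1)) : Set X) ⊆ I (descend I u T n) := by
  rw [descend]
  split_ifs with h
  exacts [h.1, Subset.rfl]

theorem descend_le (hu : Monotone u) (n : ℕ) : descend I u T n ≤ u n := by
  induction n with
  | zero => exact Nat.zero_le _
  | succ n ih =>
    rw [descend]
    split_ifs with h
    exacts [h.2, ih.trans (hu n.le_succ)]

theorem nonempty_iInter_descend [T2Space X] (u : ℕ → ℕ) :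
    (⋂ n, (I (descend I u T n) : Set X)).Nonempty :=
  IsCompact.nonempty_iInter_of_sequence_nonempty_isCompact_isClosed _
    (descend_succ_subset I T u) (fun _ => (I _).nonempty) (I _).isCompact
    (fun _ => (I _).isCompact.isClosed)

variable {I T}

theorem descend_succ_eq_of_eq_strategy {σ : ℕ → ℕ → ℕ} (hσ : ∀ n i, (I (σ n i) : Set X) ⊆ I i)
    (hu : Monotone u) {n : ℕ} (hσu : ∀ j ≤ u n, σ n j ≤ u (n + 1))
    (hT : ∀ j ≤ u n, T n j = σ n j) : descend I u T (n + 1) = σ n (descend I u T n) := by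
  have hle := descend_le I T hu n
  rw [descend, hT _ hle, if_pos ⟨hσ n _, hσu _ hle⟩]

end Descent

theorem InfinitelyOftenEqual.exists_not_isMeagre_range {ι : Type*} {F : ι → ℕ → ℕ}
    (hF : InfinitelyOftenEqual F) (X : Type*) [TopologicalSpace X] [T2Space X]
    [LocallyCompactSpace X] [SecondCountableTopology X] [Nonempty X] :
    ∃ Y : ι × ι → X, ¬ IsMeagre (range Y) := by
  obtain ⟨I, hI⟩ := exists_isCompactPiBase X
  obtain ⟨table, htable⟩ := exists_surjective_nat (ℕ →₀ ℕ)
  choose Y hY using fun q : ι × ι =>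
    nonempty_iInter_descend I (fun n => table (F q.2 n)) (envelope (F q.1))
  refine ⟨Y, fun hmeagre => ?_⟩
  obtain ⟨σ, hσ, hσY⟩ := hI.exists_strategy hmeagre
  obtain ⟨α, hα⟩ := hF.exists_frequently_forall_le_envelope σ
  set u := envelope (F α)
  obtain ⟨β, hβ⟩ := hF.comp_surjective htable {n | ∀ j ≤ u n, σ n j ≤ u (n + 1)} hα fun n =>
    Finsupp.indicator (Finset.Iic (u n)) fun j _ => σ n j
  refine hσY (Y (α, β)) (hβ.mono fun n ⟨hbound, hn⟩ => ?_) (mem_range_self _)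
  have hT (j : ℕ) (hj : j ≤ u n) : table (F β n) j = σ n j :=
    (DFunLike.congr_fun hn j).trans (Finsupp.indicator_of_mem (Finset.mem_Iic.2 hj) _)
  have hmove := descend_succ_eq_of_eq_strategy (T := fun n => table (F β n)) hσ u.monotone hbound hT
  exact ⟨_, hmove ▸ mem_iInter.1 (hY (α, β)) (n + 1)⟩

/-! ### Cardinalities -/

theorem nonMeagreCard_le {X : Set ℝ} (hX : ¬ IsMeagre X) : nonMeagreCard ≤ Cardinal.mk X :=
  csInf_le' ⟨X, hX, rfl⟩

theorem exists_mk_eq_nonMeagreCard :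
    ∃ X : Set ℝ, ¬ IsMeagre X ∧ nonMeagreCard = Cardinal.mk X :=
  csInf_mem (s := {c : Cardinal | ∃ X : Set ℝ, ¬ IsMeagre X ∧ c = Cardinal.mk X})
    ⟨_, univ, not_isMeagre_of_isOpen isOpen_univ univ_nonempty, rfl⟩

theorem InfinitelyOftenEqual.nonMeagreCard_le_mk {ι : Type} {F : ι → ℕ → ℕ}
    (hF : InfinitelyOftenEqual F) : nonMeagreCard ≤ Cardinal.mk ι := by
  obtain ⟨Y, hY⟩ := hF.exists_not_isMeagre_range ℝ
  have hι : Cardinal.aleph0 ≤ Cardinal.mk ι := by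
    rw [Cardinal.aleph0_le_mk_iff, ← not_finite_iff_infinite]
    intro _
    exact hY (isMeagre_of_countable (countable_range Y))
  calc nonMeagreCard ≤ Cardinal.mk (range Y) := nonMeagreCard_le hY
    _ ≤ Cardinal.mk (ι × ι) := Cardinal.mk_range_le
    _ = Cardinal.mk ι * Cardinal.mk ι := (Cardinal.mul_def ι ι).symm
    _ = Cardinal.mk ι := Cardinal.mul_eq_self hι

theorem conclusion :
    nonMeagreCard = sInf {c : Cardinal | ∃ Φ : Set (ℕ → ℝ),
      (∀ a ∈ Φ, TendsToInfty a) ∧ CondCm 1 Φ ∧ ¬ CondCm 2 Φ ∧ c = Cardinal.mk Φ} := by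
  obtain ⟨X, hX, hcard⟩ := exists_mk_eq_nonMeagreCard
  have hwave : ∀ a ∈ wave '' X, ∀ n : ℕ, a n ∈ Icc (n : ℝ) (n + 1) :=
    forall_mem_image.2 fun t _ => wave_mem_Icc t
  have hmem : Cardinal.mk (wave '' X) ∈ {c : Cardinal | ∃ Φ : Set (ℕ → ℝ),
      (∀ a ∈ Φ, TendsToInfty a) ∧ CondCm 1 Φ ∧ ¬ CondCm 2 Φ ∧ c = Cardinal.mk Φ} :=
    ⟨wave '' X, fun a ha => tendsToInfty_of_natCast_le fun n => (hwave a ha n).1,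
      condCm_one_image_wave hX, not_condCm_two_of_mem_Icc hwave, rfl⟩
  apply le_antisymm
  · refine le_csInf ⟨_, hmem⟩ ?_
    rintro _ ⟨Φ, -, h₁, h₂, rfl⟩
    obtain ⟨F, hF⟩ := exists_infinitelyOftenEqual h₁ h₂
    exact hF.nonMeagreCard_le_mk
  · exact (csInf_le' hmem).trans (Cardinal.mk_image_le.trans hcard.ge)
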